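/- Let κ* = c/(cγ + λ̄γ² + √(λ̄cγ³ + λ̄²γ⁴)) and θ* = (c/(λ̄γ))·(1 − κ*γ) − κ*γ. Then 0 < κ*γ < 1, θ* > −1, and (κ*, θ*) is a saddle point of F_J, i.e. F_J(κ, θ*) ≤ F_J(κ*, θ*) ≤ F_J(κ*, θ) for all κ with κγ < 1 and all θ > −1; in particular sup over κ of inf over θ of F_J is attained at (κ*, θ*). -/

import Mathlib

lemma aux_log_low (t v : ℝ) (ht : 0 < t) (hv : 0 < v) :
    t - 1/v ≤ t * Real.log v + t * Real.log t := by
  have h := Real.one_sub_inv_le_log_of_pos (mul_pos ht hv)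
  rw [Real.log_mul ht.ne' hv.ne'] at h
  have h2 := mul_le_mul_of_nonneg_left h ht.le
  have h3 : t * (1 - (t*v)⁻¹) = t - 1/v := by field_simp
  linarith

/-- **Saddle point of the robust objective with Poisson jumps.**
With `κ* = c/(cγ + λ̄γ² + √(λ̄cγ³ + λ̄²γ⁴))` and `θ* = (c/(λ̄γ))(1 − κ*γ) − κ*γ`,
one has `0 < κ*γ < 1`, `θ* > −1`, and `(κ*, θ*)` is a saddle point of `F_J` on
`{κγ < 1} × {θ > −1}`; in particular `sup_κ inf_θ F_J` is attained at `(κ*, θ*)`. -/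
theorem jump_robust_saddle_point
    (c lamb γ : ℝ) (hc : 0 < c) (hlamb : 0 < lamb) (hγ : 0 < γ)
    (FJ : ℝ → ℝ → ℝ)
    (hFJ : ∀ κ θ : ℝ, κ*γ < 1 → -1 < θ →
      FJ κ θ = c*κ + lamb*κ*γ + lamb*(1 + θ)*Real.log (1 - κ*γ)
        + lamb*((1 + θ)*Real.log (1 + θ) - θ))
    (κs θs : ℝ)
    (hκs : κs = c / (c*γ + lamb*γ^2 + Real.sqrt (lamb*c*γ^3 + lamb^2*γ^4)))
    (hθs : θs = (c/(lamb*γ))*(1 - κs*γ) - κs*γ) :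
    0 < κs*γ ∧ κs*γ < 1 ∧ -1 < θs ∧
    (∀ κ : ℝ, κ*γ < 1 → FJ κ θs ≤ FJ κs θs) ∧
    (∀ θ : ℝ, -1 < θ → FJ κs θs ≤ FJ κs θ) ∧
    (⨆ κ : {x : ℝ // x*γ < 1}, ⨅ θ : {x : ℝ // (-1:ℝ) < x}, FJ κ.1 θ.1)
      = FJ κs θs := by
  have hA : 0 < c + lamb*γ := by positivity
  have hB : 0 < lamb*γ := by positivity
  set S := Real.sqrt (lamb*c*γ^3 + lamb^2*γ^4) with hS
  have hS2 : S^2 = lamb*c*γ^3 + lamb^2*γ^4 := Real.sq_sqrt (by positivity)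
  have hSp : 0 < S := Real.sqrt_pos.mpr (by positivity)
  have hD : 0 < c*γ + lamb*γ^2 + S := by positivity
  obtain ⟨u, hu⟩ : ∃ u, u = 1 - κs*γ := ⟨_, rfl⟩
  have hκ0 : 0 < κs := by rw [hκs]; positivity
  have huD : u = (lamb*γ^2 + S)/(c*γ + lamb*γ^2 + S) := by
    rw [hu, hκs]; field_simp; ring
  have hup : 0 < u := by rw [huD]; positivity
  have hu2 : u^2 * (c + lamb*γ) = lamb*γ := by
    rw [huD, div_pow, div_mul_eq_mul_div, div_eq_iff (by positivity)]
    linear_combination c * hS2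
  have hts : 1 + θs = u * (c + lamb*γ)/(lamb*γ) := by
    rw [hθs, ← hu, show κs*γ = 1 - u by linarith]; field_simp; ring
  have htu : (1 + θs) * u = 1 := by
    rw [hts, div_mul_eq_mul_div, div_eq_iff hB.ne']; linarith
  have htp : 0 < 1 + θs := by rw [hts]; positivity
  have hk1 : κs*γ < 1 := by linarith
  have ht1 : -1 < θs := by linarith
  have hinv : 1/u = 1 + θs := by rw [div_eq_iff hup.ne']; exact htu.symm
  have hlog : Real.log (1 + θs) + Real.log u = 0 := by
    rw [← Real.log_mul htp.ne' hup.ne', htu, Real.log_one]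
  have h4 : ∀ κ : ℝ, κ*γ < 1 → FJ κ θs ≤ FJ κs θs := by
    intro κ hκ
    rw [hFJ κ θs hκ ht1, hFJ κs θs hk1 ht1, ← hu]
    have hv : 0 < 1 - κ*γ := by linarith
    have h := Real.log_le_sub_one_of_pos (div_pos hv hup)
    rw [Real.log_div hv.ne' hup.ne'] at h
    have h2 := mul_le_mul_of_nonneg_left h (mul_pos hlamb htp).le
    have h3 : lamb*(1 + θs) * ((1 - κ*γ)/u - 1) = (c + lamb*γ) * (κs - κ) := by
      rw [hts]; field_simp; rw [hu]; ring
    linarith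
  have h5 : ∀ θ : ℝ, -1 < θ → FJ κs θs ≤ FJ κs θ := by
    intro θ hθ
    rw [hFJ κs θs hk1 ht1, hFJ κs θ hk1 hθ, ← hu]
    have h := aux_log_low (1 + θ) u (by linarith) hup
    rw [hinv] at h
    have h2 := mul_le_mul_of_nonneg_left h hlamb.le
    have h3 : lamb * (1 + θs) * (Real.log (1 + θs) + Real.log u) = 0 := by rw [hlog, mul_zero]
    linarith
  refine ⟨by positivity, hk1, ht1, h4, h5, ?_⟩
  have hbdd : ∀ κ : {x : ℝ // x*γ < 1},
      BddBelow (Set.range fun θ : {x : ℝ // (-1:ℝ) < x} => FJ κ.1 θ.1) := by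
    rintro ⟨κ, hκ⟩
    refine ⟨c*κ + lamb*κ*γ + lamb*(1 - 1/(1 - κ*γ)), ?_⟩
    rintro _ ⟨⟨θ, hθ⟩, rfl⟩
    simp only
    rw [hFJ κ θ hκ hθ]
    have h := aux_log_low (1 + θ) (1 - κ*γ) (by linarith) (by linarith)
    have h2 := mul_le_mul_of_nonneg_left h hlamb.le
    linarith
  have hle : ∀ κ : {x : ℝ // x*γ < 1},
      (⨅ θ : {x : ℝ // (-1:ℝ) < x}, FJ κ.1 θ.1) ≤ FJ κs θs := fun κ =>
    (ciInf_le (hbdd κ) ⟨θs, ht1⟩).trans (h4 κ.1 κ.2)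
  haveI : Nonempty {x : ℝ // x*γ < 1} := ⟨⟨κs, hk1⟩⟩
  haveI : Nonempty {x : ℝ // (-1:ℝ) < x} := ⟨⟨θs, ht1⟩⟩
  apply le_antisymm (ciSup_le hle)
  have hb : BddAbove (Set.range fun κ : {x : ℝ // x*γ < 1} =>
      ⨅ θ : {x : ℝ // (-1:ℝ) < x}, FJ κ.1 θ.1) :=
    ⟨FJ κs θs, by rintro _ ⟨κ, rfl⟩; exact hle κ⟩
  refine le_trans ?_ (le_ciSup hb ⟨κs, hk1⟩)
  exact le_ciInf fun θ => h5 θ.1 θ.2
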